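/- Let G be a group acting ergodically on a probability space (X,μ), Δ a countable group, and w₁, w₂ : G × X → Δ cocycles with uniform distance d(w₁,w₂) < 1/8. Then there exists a measurable map φ : X → Δ with μ({x : φ(x) = 1}) > 3/4 such that for every g ∈ G, w₁(g,x) = φ(g·x) w₂(g,x) φ(x)⁻¹ for almost every x ∈ X. -/

import Mathlib

open MeasureTheory

/-!
Let `G` act on `X × Δ` by `g • (x, δ) = (g • x, w₁ g x * δ * (w₂ g x)⁻¹)`. A transfer function is
a section whose graph is invariant, and closeness of the cocycles says that the graph of the
constant section `1` is moved little. Hence the vector of minimal norm in the closed convex hull of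
the orbit of its indicator in `L²(X × Δ)` is an invariant function `F` that is still close to that
indicator. Limits of convex combinations of graphs have mass at most `1` on each fibre `{x} × Δ`,
so `F (x, δ) > 1 / 2` for at most one `δ`, and this `δ` is the value of the transfer function at
`x`. The set of `x` for which it exists is invariant, and has positive measure by Markov's
inequality, so it is conull by ergodicity.
-/

section ClosedConvexHull

variable {H : Type*} [NormedAddCommGroup H]

theorem mapsTo_closedConvexHull {E F : Type*} [AddCommGroup E] [Module ℝ E] [TopologicalSpace E]
    [AddCommGroup F] [Module ℝ F] [TopologicalSpace F] {s : Set E} {t : Set F} (L : E →L[ℝ] F)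
    (ht : Convex ℝ t) (ht' : IsClosed t) (hL : Set.MapsTo L s t) :
    Set.MapsTo L (closedConvexHull ℝ s) t :=
  closedConvexHull_min hL (ht.linear_preimage L.toLinearMap) (ht'.preimage L.continuous)

theorem eq_of_forall_norm_le_of_norm_le [NormedSpace ℝ H] [StrictConvexSpace ℝ H] {K : Set H}
    (hK : Convex ℝ K) {v w : H} (hv : v ∈ K) (hmin : ∀ u ∈ K, ‖v‖ ≤ ‖u‖) (hw : w ∈ K)
    (hwv : ‖w‖ ≤ ‖v‖) : w = v := by
  by_contra hne
  exact (hmin _ (hK hw hv one_half_pos.le one_half_pos.le (add_halves 1))).not_gt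
    (norm_combo_lt_of_ne hwv le_rfl hne one_half_pos one_half_pos (add_halves 1))

theorem exists_mem_forall_fixed_of_norm_le [InnerProductSpace ℝ H] [CompleteSpace H] {ι : Type*}
    (U : ι → H → H) (hU : ∀ i v, ‖U i v‖ ≤ ‖v‖) {K : Set H} (hne : K.Nonempty)
    (hclosed : IsClosed K) (hconv : Convex ℝ K) (hmaps : ∀ i, Set.MapsTo (U i) K K) :
    ∃ v ∈ K, ∀ i, U i v = v := by
  obtain ⟨v, hv, hdist⟩ :=
    exists_norm_eq_iInf_of_complete_convex hne hclosed.isComplete hconv 0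
  have hmin : ∀ u ∈ K, ‖v‖ ≤ ‖u‖ := fun u hu => by
    have hle := ciInf_le (f := fun w : K => ‖0 - (w : H)‖)
      ⟨0, Set.forall_mem_range.2 fun _ => norm_nonneg _⟩ ⟨u, hu⟩
    rwa [← hdist, zero_sub, zero_sub, norm_neg, norm_neg] at hle
  exact ⟨v, hv, fun i => eq_of_forall_norm_le_of_norm_le hconv hv hmin (hmaps i hv) (hU i v)⟩

theorem exists_mem_closedConvexHull_forall_fixed [InnerProductSpace ℝ H] [CompleteSpace H]
    {ι : Type*} (U : ι → H →L[ℝ] H) (hU : ∀ i v, ‖U i v‖ ≤ ‖v‖) {s : Set H} (hne : s.Nonempty)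
    (hmaps : ∀ i, Set.MapsTo (U i) s s) : ∃ v ∈ closedConvexHull ℝ s, ∀ i, U i v = v :=
  exists_mem_forall_fixed_of_norm_le (fun i => U i) hU (hne.mono subset_closedConvexHull)
    isClosed_closedConvexHull convex_closedConvexHull fun i =>
      mapsTo_closedConvexHull (U i) convex_closedConvexHull isClosed_closedConvexHull
        ((hmaps i).mono_right subset_closedConvexHull)

end ClosedConvexHull

theorem convex_Iic_Lp {X : Type*} [MeasurableSpace X] {μ : Measure X} {p : ENNReal}
    (h : Lp ℝ p μ) : Convex ℝ (Set.Iic h) := by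
  intro f hf g hg a b ha hb hab
  simp only [Set.mem_Iic, ← Lp.coeFn_le] at hf hg ⊢
  filter_upwards [hf, hg, Lp.coeFn_add (a • f) (b • g), Lp.coeFn_smul a f, Lp.coeFn_smul b g]
    with x hfx hgx hadd haf hbg
  rw [hadd, Pi.add_apply, haf, hbg, Pi.smul_apply, Pi.smul_apply]
  exact convex_Iic (𝕜 := ℝ) (h x) hfx hgx ha hb hab

theorem exists_mem_closedConvexHull_orbit_ae_invariant {G Y : Type*} [Mul G] [Nonempty G]
    [MeasurableSpace Y] {ν : Measure Y} {T : G → Y → Y} (hT : ∀ g, MeasurePreserving (T g) ν ν)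
    (hmul : ∀ g h, T (g * h) = T g ∘ T h) (ξ : Lp ℝ 2 ν) :
    ∃ F ∈ closedConvexHull ℝ (Set.range fun g => Lp.compMeasurePreserving (T g) (hT g) ξ),
      ∀ g, F ∘ T g =ᵐ[ν] F := by
  let U (g : G) := Lp.compMeasurePreservingₗᵢ ℝ (E := ℝ) (p := 2) (T g) (hT g)
  let orbit := Set.range fun g => U g ξ
  have hmaps g : Set.MapsTo (U g) orbit orbit := by
    rintro _ ⟨h, rfl⟩
    refine ⟨h * g, ?_⟩
    have hcomp := Lp.compMeasurePreserving_comp_apply ξ (hT h) (hT g)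
    simp only [← hmul] at hcomp
    exact hcomp
  obtain ⟨F, hF, hfix⟩ := exists_mem_closedConvexHull_forall_fixed
    (fun g => (U g).toContinuousLinearMap) (fun g v => ((U g).norm_map v).le)
    (Set.range_nonempty _) hmaps
  refine ⟨F, hF, fun g => ?_⟩
  have hcoe := Lp.coeFn_compMeasurePreserving F (hT g)
  rw [show Lp.compMeasurePreserving (T g) (hT g) F = F from hfix g] at hcoe
  exact hcoe.symm

section Sections

variable {X Δ : Type*} [MeasurableSpace X] [MeasurableSpace Δ] [MeasurableSingletonClass Δ]
  {μ : Measure X}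

theorem measurePreserving_prodMk_right_count [SFinite μ] [Countable Δ] (δ : Δ) :
    MeasurePreserving (fun x : X => (x, δ)) μ
      ((μ.prod Measure.count).restrict (Set.univ ×ˢ {δ})) := by
  refine ⟨measurable_prodMk_right, ?_⟩
  rw [← Measure.prod_restrict, Measure.restrict_univ, Measure.restrict_singleton,
    Measure.count_singleton, one_smul, Measure.prod_dirac]

variable [Countable Δ] {p : ENNReal} [Fact (1 ≤ p)]

/-- The restriction of an `Lᵖ` function on `X × Δ` to the slice `X × {δ}`, as a continuous linear
map to `Lᵖ(X)`. The fibre `Δ` carries the counting measure. -/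
noncomputable def lpSection [SFinite μ] (δ : Δ) :
    Lp ℝ p (μ.prod (Measure.count : Measure Δ)) →L[ℝ] Lp ℝ p μ :=
  (Lp.compMeasurePreservingₗᵢ ℝ _ (measurePreserving_prodMk_right_count δ)).toContinuousLinearMap ∘L
    LpToLpRestrictCLM (X × Δ) ℝ ℝ _ p (Set.univ ×ˢ {δ})

theorem coeFn_lpSection [SFinite μ] (F : Lp ℝ p (μ.prod (Measure.count : Measure Δ))) (δ : Δ) :
    lpSection δ F =ᵐ[μ] fun x => F (x, δ) :=
  (Lp.coeFn_compMeasurePreserving _ (measurePreserving_prodMk_right_count δ)).trans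
    ((measurePreserving_prodMk_right_count δ).quasiMeasurePreserving.ae_eq_comp
      (LpToLpRestrictCLM_coeFn ℝ _ F))

theorem coeFn_sum_lpSection [SFinite μ] (F : Lp ℝ p (μ.prod (Measure.count : Measure Δ)))
    (S : Finset Δ) : (∑ δ ∈ S, lpSection δ) F =ᵐ[μ] fun x => ∑ δ ∈ S, F (x, δ) := by
  rw [sum_apply]
  filter_upwards [Lp.coeFn_finsetSum S fun δ => lpSection δ F,
    ae_all_iff.2 (coeFn_lpSection F)] with x hsum hsec
  rw [hsum, Finset.sum_apply]
  exact Finset.sum_congr rfl fun δ _ => hsec δ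

variable [IsFiniteMeasure μ]

theorem integrable_section (F : Lp ℝ p (μ.prod (Measure.count : Measure Δ))) (δ : Δ) :
    Integrable (fun x => F (x, δ)) μ :=
  ((Lp.memLp (lpSection δ F)).integrable Fact.out).congr (coeFn_lpSection F δ)

theorem ae_sum_section_le_of_mem_closedConvexHull {c : ℝ} {S : Finset Δ}
    {s : Set (Lp ℝ p (μ.prod (Measure.count : Measure Δ)))}
    {F : Lp ℝ p (μ.prod (Measure.count : Measure Δ))}
    (hs : ∀ F ∈ s, ∀ᵐ x ∂μ, ∑ δ ∈ S, F (x, δ) ≤ c) (hF : F ∈ closedConvexHull ℝ s) :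
    ∀ᵐ x ∂μ, ∑ δ ∈ S, F (x, δ) ≤ c := by
  have hIic (F : Lp ℝ p (μ.prod (Measure.count : Measure Δ))) :
      (∑ δ ∈ S, lpSection δ) F ∈ Set.Iic (Lp.const p μ c) ↔
        ∀ᵐ x ∂μ, ∑ δ ∈ S, F (x, δ) ≤ c := by
    rw [Set.mem_Iic, ← Lp.coeFn_le]
    exact Filter.eventually_congr (by
      filter_upwards [coeFn_sum_lpSection F S, Lp.coeFn_const p μ c] with x hsum hconst
      rw [hsum, hconst, Function.const_apply])
  exact (hIic F).1 <| mapsTo_closedConvexHull (∑ δ ∈ S, lpSection δ) (convex_Iic_Lp _) isClosed_Iic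
    (fun F hFs => (hIic F).2 (hs F hFs)) hF

theorem le_integral_section_of_mem_closedConvexHull {c : ℝ} {δ : Δ}
    {s : Set (Lp ℝ 2 (μ.prod (Measure.count : Measure Δ)))}
    {F : Lp ℝ 2 (μ.prod (Measure.count : Measure Δ))}
    (hs : ∀ F ∈ s, c ≤ ∫ x, F (x, δ) ∂μ) (hF : F ∈ closedConvexHull ℝ s) :
    c ≤ ∫ x, F (x, δ) ∂μ := by
  have hfint (F : Lp ℝ 2 (μ.prod (Measure.count : Measure Δ))) :
      (innerSL ℝ (Lp.const 2 μ (1 : ℝ)) ∘L lpSection δ) F = ∫ x, F (x, δ) ∂μ := by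
    rw [ContinuousLinearMap.comp_apply, innerSL_apply_apply, ← indicatorConstLp_univ,
      L2.inner_indicatorConstLp_one, setIntegral_univ]
    exact integral_congr_ae (coeFn_lpSection F δ)
  rw [← hfint]
  exact mapsTo_closedConvexHull _ (convex_Ici c) isClosed_Ici
    (fun F hFs => (hs F hFs).trans_eq (hfint F).symm) hF

end Sections

section SkewProduct

variable {G X Δ : Type*} [Group Δ]

/-- The cocycle identity for a map `w : G × X → Δ`, in curried form and required at every point. -/
def IsCocycle [Mul G] [SMul G X] (w : G → X → Δ) : Prop :=
  ∀ (g h : G) (x : X), w (g * h) x = w g (h • x) * w h x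

/-- The skew product on `X × Δ` in which two cocycles act on the fibre from the two sides. The
graph of a transfer function between the cocycles is invariant under it. -/
def cocycleSkew [SMul G X] (w₁ w₂ : G → X → Δ) (g : G) (p : X × Δ) : X × Δ :=
  (g • p.1, w₁ g p.1 * p.2 * (w₂ g p.1)⁻¹)

theorem cocycleSkew_mul [Semigroup G] [SemigroupAction G X] {w₁ w₂ : G → X → Δ}
    (hw₁ : IsCocycle w₁) (hw₂ : IsCocycle w₂) (g h : G) :
    cocycleSkew w₁ w₂ (g * h) = cocycleSkew w₁ w₂ g ∘ cocycleSkew w₁ w₂ h := by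
  funext p
  simp only [cocycleSkew, Function.comp_apply, hw₁ g h, hw₂ g h, mul_smul, mul_inv_rev, mul_assoc]

variable [Countable Δ] [MeasurableSpace Δ] [MeasurableSingletonClass Δ] [MeasurableSpace X]
  {μ : Measure X}

theorem measurePreserving_cocycleSkew [SMul G X] [SFinite μ] {w₁ w₂ : G → X → Δ} {g : G}
    (hg : MeasurePreserving (fun x : X => g • x) μ μ)
    (hw₁ : Measurable (w₁ g)) (hw₂ : Measurable (w₂ g)) :
    MeasurePreserving (cocycleSkew w₁ w₂ g) (μ.prod Measure.count) (μ.prod Measure.count) := by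
  refine hg.skew_product (g := fun x δ => w₁ g x * δ * (w₂ g x)⁻¹) ?_ (.of_forall fun x => ?_)
  · exact measurable_from_prod_countable_left fun δ => (hw₁.mul_const δ).mul hw₂.inv
  · exact ((measurePreserving_mul_right Measure.count (w₂ g x)⁻¹).comp
      (measurePreserving_mul_left Measure.count (w₁ g x))).map_eq

variable [IsFiniteMeasure μ]

/-- The indicator function of `X × {1}`, the graph of the constant function `1`, as an element of
`L²(X × Δ)`. -/
noncomputable def oneGraphIndicator (μ : Measure X) [IsFiniteMeasure μ] (Δ : Type*) [Group Δ]
    [Countable Δ] [MeasurableSpace Δ] [MeasurableSingletonClass Δ] :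
    Lp ℝ 2 (μ.prod (Measure.count : Measure Δ)) :=
  indicatorConstLp 2 (s := Set.univ ×ˢ {1}) (MeasurableSet.univ.prod (measurableSet_singleton 1))
    (by simp [Measure.prod_prod]) 1

open scoped Classical in
theorem ae_compMeasurePreserving_oneGraphIndicator [SMul G X] {w₁ w₂ : G → X → Δ} {g : G}
    (hT : MeasurePreserving (cocycleSkew w₁ w₂ g) (μ.prod Measure.count) (μ.prod Measure.count)) :
    ∀ᵐ x ∂μ, ∀ δ, Lp.compMeasurePreserving _ hT (oneGraphIndicator μ Δ) (x, δ) =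
      if δ = (w₁ g x)⁻¹ * w₂ g x then 1 else 0 := by
  have hcomp := (Lp.coeFn_compMeasurePreserving (oneGraphIndicator μ Δ) hT).trans
    (hT.quasiMeasurePreserving.ae_eq_comp indicatorConstLp_coeFn)
  filter_upwards [Measure.ae_ae_of_ae_prod hcomp] with x hx δ
  rw [Measure.ae_count_iff.1 hx δ]
  simp [cocycleSkew, Set.indicator_apply, mul_inv_eq_one, eq_inv_mul_iff_mul_eq]

theorem exists_invariant_of_forall_le_measureReal_eq [Semigroup G] [Nonempty G]
    [SemigroupAction G X] (hG : ∀ g : G, MeasurePreserving (fun x : X => g • x) μ μ)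
    {w₁ w₂ : G → X → Δ} (hw₁meas : ∀ g, Measurable (w₁ g)) (hw₂meas : ∀ g, Measurable (w₂ g))
    (hw₁ : IsCocycle w₁) (hw₂ : IsCocycle w₂) {c : ℝ}
    (hc : ∀ g, c ≤ μ.real {x | w₁ g x = w₂ g x}) :
    ∃ f : X × Δ → ℝ, Measurable f ∧ (∀ δ, Integrable (fun x => f (x, δ)) μ) ∧
      (∀ g, ∀ᵐ x ∂μ, ∀ δ, f (cocycleSkew w₁ w₂ g (x, δ)) = f (x, δ)) ∧
      (∀ᵐ x ∂μ, ∀ S : Finset Δ, ∑ δ ∈ S, f (x, δ) ≤ 1) ∧ c ≤ ∫ x, f (x, 1) ∂μ := by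
  classical
  have hT g := measurePreserving_cocycleSkew (hG g) (hw₁meas g) (hw₂meas g)
  obtain ⟨F, hF, hinv⟩ := exists_mem_closedConvexHull_orbit_ae_invariant hT
    (cocycleSkew_mul hw₁ hw₂) (oneGraphIndicator μ Δ)
  refine ⟨F, (Lp.stronglyMeasurable F).measurable, integrable_section F, fun g => ?_,
    ae_all_iff.2 fun S => ae_sum_section_le_of_mem_closedConvexHull
      (Set.forall_mem_range.2 fun g => ?_) hF,
    le_integral_section_of_mem_closedConvexHull (Set.forall_mem_range.2 fun g => ?_) hF⟩
  · filter_upwards [Measure.ae_ae_of_ae_prod (hinv g)] with x hx using Measure.ae_count_iff.1 hx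
  · filter_upwards [ae_compMeasurePreserving_oneGraphIndicator (hT g)] with x hx
    refine (Finset.sum_congr rfl fun δ _ => hx δ).trans_le ?_
    rw [Finset.sum_ite_eq']
    split_ifs <;> norm_num
  · refine (hc g).trans_eq ?_
    rw [← integral_indicator_one (measurableSet_eq_fun (hw₁meas g) (hw₂meas g))]
    refine integral_congr_ae ?_
    filter_upwards [ae_compMeasurePreserving_oneGraphIndicator (hT g)] with x hx
    refine Eq.trans ?_ (hx 1).symm
    simp [Set.indicator_apply, eq_inv_mul_iff_mul_eq]

end SkewProduct

theorem exists_measurable_forall_of_exists {X Δ : Type*} [MeasurableSpace X] [Countable Δ]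
    [Nonempty Δ] [MeasurableSpace Δ] {P : X → Δ → Prop} (hP : ∀ δ, MeasurableSet {x | P x δ}) :
    ∃ φ : X → Δ, Measurable φ ∧ ∀ x, (∃ δ, P x δ) → P x (φ x) := by
  classical
  obtain ⟨e, he⟩ := exists_surjective_nat Δ
  have hex (x : X) : ∃ n, P x (e n) ∨ ¬∃ m, P x (e m) := by
    simp only [exists_or, exists_const]
    exact em _
  have hdefined : MeasurableSet {x | ∃ m, P x (e m)} := by
    simpa only [Set.ofPred_exists] using MeasurableSet.iUnion fun m => hP (e m)
  refine ⟨fun x => e (Nat.find (hex x)), (Measurable.of_discrete (f := e)).comp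
    (measurable_find hex fun n => ?_), fun x hx => ?_⟩
  · exact (hP _).union hdefined.compl
  · exact (Nat.find_spec (hex x)).resolve_right (not_not.2 (he.exists.1 hx))

theorem integral_le_mul_add_mul_measureReal_lt {X : Type*} [MeasurableSpace X] {μ : Measure X}
    [IsFiniteMeasure μ] {f : X → ℝ} (hf : Measurable f) (hfint : Integrable f μ) {b : ℝ}
    (hb : ∀ᵐ x ∂μ, f x ≤ b) (t : ℝ) :
    ∫ x, f x ∂μ ≤ t * μ.real Set.univ + (b - t) * μ.real {x | t < f x} := by
  have hS : MeasurableSet {x | t < f x} := measurableSet_lt measurable_const hf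
  have hind : Integrable ({x | t < f x}.indicator fun _ => b - t) μ :=
    (integrable_const _).indicator hS
  calc ∫ x, f x ∂μ
      ≤ ∫ x, t + {x | t < f x}.indicator (fun _ => b - t) x ∂μ := by
        refine integral_mono_ae hfint ((integrable_const t).add hind) ?_
        filter_upwards [hb] with x hx
        by_cases ht : t < f x
        · simpa [ht] using hx
        · simpa [ht] using not_lt.1 ht
    _ = t * μ.real Set.univ + (b - t) * μ.real {x | t < f x} := by
        rw [integral_add (integrable_const t) hind, integral_const, integral_indicator_const _ hS,
          smul_eq_mul, smul_eq_mul, mul_comm t, mul_comm (b - t)]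

theorem univ_sub_two_mul_le_measure_half_lt {X : Type*} [MeasurableSpace X]
    {μ : Measure X} [IsFiniteMeasure μ] {f : X → ℝ} (hf : Measurable f) (hfint : Integrable f μ)
    (hle : ∀ᵐ x ∂μ, f x ≤ 1) {d : ENNReal} (hd_top : d ≠ ⊤)
    (hd : μ.real Set.univ - d.toReal ≤ ∫ x, f x ∂μ) :
    μ Set.univ - 2 * d ≤ μ {x | 1 / 2 < f x} := by
  have hmarkov := integral_le_mul_add_mul_measureReal_lt hf hfint hle (1 / 2)
  rw [tsub_le_iff_right, ← ENNReal.toReal_le_toReal (by finiteness) (by finiteness),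
    ENNReal.toReal_add (by finiteness) (by finiteness), ENNReal.toReal_mul, ENNReal.toReal_ofNat]
  simp only [Measure.real] at hd hmarkov
  linarith

theorem eq_of_sum_le_one_of_half_lt {Δ : Type*} {a : Δ → ℝ}
    (ha : ∀ S : Finset Δ, ∑ δ ∈ S, a δ ≤ 1) {δ ε : Δ} (hδ : 1 / 2 < a δ) (hε : 1 / 2 < a ε) :
    δ = ε := by
  classical
  by_contra hne
  have hpair := ha {δ, ε}
  rw [Finset.sum_pair hne] at hpair
  linarith

section UniformDistance

variable {ι X Δ : Type*} [MeasurableSpace X] {μ : Measure X} [IsFiniteMeasure μ]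

theorem iSup_measure_lt_top (s : ι → Set X) : ⨆ i, μ (s i) < ⊤ :=
  (iSup_le fun _ => measure_mono (Set.subset_univ _)).trans_lt (measure_lt_top μ _)

theorem measureReal_univ_sub_iSup_measure_ne_le [MeasurableSpace Δ] [MeasurableEq Δ]
    {u v : ι → X → Δ} {i : ι} (hu : Measurable (u i)) (hv : Measurable (v i)) :
    μ.real Set.univ - (⨆ i, μ {x | u i x ≠ v i x}).toReal ≤ μ.real {x | u i x = v i x} := by
  have hle : μ.real {x | u i x = v i x}ᶜ ≤ (⨆ i, μ {x | u i x ≠ v i x}).toReal :=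
    ENNReal.toReal_mono (iSup_measure_lt_top _).ne (le_iSup (fun i => μ {x | u i x ≠ v i x}) i)
  rw [measureReal_compl (measurableSet_eq_fun hu hv)] at hle
  linarith

end UniformDistance

section Transfer

variable {G X Δ : Type*} [Group Δ] [Countable Δ] [MeasurableSpace Δ] [MeasurableSpace X]
  {μ : Measure X} {w₁ w₂ : G → X → Δ}

theorem exists_transfer_of_invariant_graph [SMul G X]
    (hG : ∀ g : G, MeasurePreserving (fun x : X => g • x) μ μ) {P : X → Δ → Prop}
    (hP : ∀ δ, MeasurableSet {x | P x δ})
    (huniq : ∀ᵐ x ∂μ, ∀ δ ε, P x δ → P x ε → δ = ε)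
    (hinv : ∀ g, ∀ᵐ x ∂μ, ∀ δ, P x δ → P (g • x) (w₁ g x * δ * (w₂ g x)⁻¹)) :
    ∃ φ : X → Δ, Measurable φ ∧ (∀ᵐ x ∂μ, ∀ δ, P x δ → φ x = δ) ∧
      ∀ g, ∀ᵐ x ∂μ, (∃ δ, P x δ) → w₁ g x = φ (g • x) * w₂ g x * (φ x)⁻¹ := by
  obtain ⟨φ, hφ, hsel⟩ := exists_measurable_forall_of_exists hP
  have hval : ∀ᵐ x ∂μ, ∀ δ, P x δ → φ x = δ := by
    filter_upwards [huniq] with x hx δ hδ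
    exact hx _ _ (hsel x ⟨δ, hδ⟩) hδ
  refine ⟨φ, hφ, hval, fun g => ?_⟩
  filter_upwards [hinv g, (hG g).quasiMeasurePreserving.ae hval] with x hx hgx hex
  rw [hgx _ (hx _ (hsel x hex))]
  group

theorem exists_transfer_on_invariant_set [Semigroup G] [Nonempty G] [SemigroupAction G X]
    [MeasurableSingletonClass Δ] [IsFiniteMeasure μ]
    (hG : ∀ g : G, MeasurePreserving (fun x : X => g • x) μ μ)
    (hw₁meas : ∀ g, Measurable (w₁ g)) (hw₂meas : ∀ g, Measurable (w₂ g))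
    (hw₁ : IsCocycle w₁) (hw₂ : IsCocycle w₂) :
    ∃ Q : Set X, MeasurableSet Q ∧ (∀ g : G, (fun x : X => g • x) ⁻¹' Q =ᵐ[μ] Q) ∧
      ∃ φ : X → Δ, Measurable φ ∧
        μ Set.univ - 2 * ⨆ g : G, μ {x | w₁ g x ≠ w₂ g x} ≤ μ {x | x ∈ Q ∧ φ x = 1} ∧
        ∀ g, ∀ᵐ x ∂μ, x ∈ Q → w₁ g x = φ (g • x) * w₂ g x * (φ x)⁻¹ := by
  obtain ⟨f, hf, hfint, hinv, hsum, hone⟩ :=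
    exists_invariant_of_forall_le_measureReal_eq hG hw₁meas hw₂meas hw₁ hw₂
      fun g => measureReal_univ_sub_iSup_measure_ne_le (hw₁meas g) (hw₂meas g)
  have hmeas (δ : Δ) : MeasurableSet {x | 1 / 2 < f (x, δ)} :=
    measurableSet_lt measurable_const (hf.comp measurable_prodMk_right)
  have hheavy g : ∀ᵐ x ∂μ, ∀ δ,
      1 / 2 < f (g • x, w₁ g x * δ * (w₂ g x)⁻¹) ↔ 1 / 2 < f (x, δ) := by
    filter_upwards [hinv g] with x hx δ
    rw [← hx δ, cocycleSkew]
  obtain ⟨φ, hφ, hval, htransfer⟩ := exists_transfer_of_invariant_graph hG hmeas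
    (by filter_upwards [hsum] with x hx δ ε using eq_of_sum_le_one_of_half_lt hx)
    fun g => (hheavy g).mono fun x hx δ => (hx δ).2
  refine ⟨{x | ∃ δ, 1 / 2 < f (x, δ)}, ?_, fun g => ?_, φ, hφ, ?_, htransfer⟩
  · simpa only [Set.ofPred_exists] using MeasurableSet.iUnion hmeas
  · filter_upwards [hheavy g] with x hx
    let e : Δ ≃ Δ := (Equiv.mulLeft (w₁ g x)).trans (Equiv.mulRight (w₂ g x)⁻¹)
    exact propext (e.exists_congr fun {δ} => (hx δ).symm).symm
  · refine (univ_sub_two_mul_le_measure_half_lt (hf.comp measurable_prodMk_right) (hfint 1) ?_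
      (iSup_measure_lt_top _).ne hone).trans (measure_mono_ae ?_)
    · filter_upwards [hsum] with x hx
      simpa only [Finset.sum_singleton, Function.comp_apply] using hx {1}
    · filter_upwards [hval] with x hx h1 using ⟨⟨1, h1⟩, hx 1 h1⟩

end Transfer

theorem three_quarters_lt_one_sub_two_mul {d : ENNReal} (hd : d < 1 / 8) :
    3 / 4 < 1 - 2 * d := by
  have hd_top : d ≠ ⊤ := hd.ne_top
  have hreal : d.toReal < 1 / 8 := by
    simpa using (ENNReal.toReal_lt_toReal hd_top (by finiteness)).2 hd
  rw [lt_tsub_iff_right, ← ENNReal.toReal_lt_toReal (by finiteness) (by finiteness),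
    ENNReal.toReal_add (by finiteness) (by finiteness), ENNReal.toReal_mul, ENNReal.toReal_div]
  simp only [ENNReal.toReal_ofNat, ENNReal.toReal_one]
  linarith

theorem stmt12_general {G X Δ : Type*} [Semigroup G] [Nonempty G] [Group Δ] [Countable Δ]
    [MeasurableSpace Δ] [MeasurableSingletonClass Δ]
    [SemigroupAction G X] [MeasurableSpace X] (μ : Measure X) [IsProbabilityMeasure μ]
    (hG : ∀ g : G, MeasurePreserving (fun x : X => g • x) μ μ)
    (herg : ∀ A : Set X, MeasurableSet A →
      (∀ g : G, (fun x : X => g • x) ⁻¹' A =ᵐ[μ] A) → μ A = 0 ∨ μ A = 1)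
    (w₁ w₂ : G → X → Δ)
    (hw₁meas : ∀ g : G, Measurable (w₁ g)) (hw₂meas : ∀ g : G, Measurable (w₂ g))
    (hw₁ : IsCocycle w₁) (hw₂ : IsCocycle w₂)
    (hd : (⨆ g : G, μ {x | w₁ g x ≠ w₂ g x}) < 1 / 2) :
    ∃ φ : X → Δ, Measurable φ ∧ 1 - 2 * (⨆ g : G, μ {x | w₁ g x ≠ w₂ g x}) ≤ μ {x | φ x = 1} ∧
      ∀ g : G, ∀ᵐ x ∂μ, w₁ g x = φ (g • x) * w₂ g x * (φ x)⁻¹ := by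
  obtain ⟨Q, hQ, hQinv, φ, hφ, hone, htransfer⟩ :=
    exists_transfer_on_invariant_set hG hw₁meas hw₂meas hw₁ hw₂
  rw [measure_univ] at hone
  have hpos : 0 < 1 - 2 * ⨆ g : G, μ {x | w₁ g x ≠ w₂ g x} :=
    tsub_pos_of_lt (by simpa [mul_comm] using (ENNReal.lt_div_iff_mul_lt (by simp) (by simp)).1 hd)
  have hQ1 : μ Q = 1 := (herg Q hQ hQinv).resolve_left
    (hpos.trans_le (hone.trans (measure_mono fun _ hx => hx.1))).ne'
  refine ⟨φ, hφ, hone.trans (measure_mono fun _ hx => hx.2), fun g => ?_⟩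
  filter_upwards [htransfer g, (prob_compl_eq_zero_iff hQ).2 hQ1] with x hx hxQ using hx hxQ

theorem stmt12 {G X Δ : Type*} [Group G] [Group Δ] [Countable Δ]
    [MeasurableSpace Δ] [MeasurableSingletonClass Δ]
    [MulAction G X] [MeasurableSpace X] (μ : Measure X) [IsProbabilityMeasure μ]
    (hG : ∀ g : G, MeasurePreserving (fun x : X => g • x) μ μ)
    (herg : ∀ A : Set X, MeasurableSet A →
      (∀ g : G, (fun x : X => g • x) ⁻¹' A =ᵐ[μ] A) → μ A = 0 ∨ μ A = 1)
    (w₁ w₂ : G → X → Δ)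
    (hw₁meas : ∀ g : G, Measurable (w₁ g)) (hw₂meas : ∀ g : G, Measurable (w₂ g))
    (hw₁ : ∀ (g h : G) (x : X), w₁ (g * h) x = w₁ g (h • x) * w₁ h x)
    (hw₂ : ∀ (g h : G) (x : X), w₂ (g * h) x = w₂ g (h • x) * w₂ h x)
    (hd : (⨆ g : G, μ {x | w₁ g x ≠ w₂ g x}) < 1 / 8) :
    ∃ φ : X → Δ, Measurable φ ∧ 3 / 4 < μ {x | φ x = 1} ∧
      ∀ g : G, ∀ᵐ x ∂μ, w₁ g x = φ (g • x) * w₂ g x * (φ x)⁻¹ := by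
  obtain ⟨φ, hφ, hone, htransfer⟩ := stmt12_general μ hG herg w₁ w₂ hw₁meas hw₂meas hw₁ hw₂
    (hd.trans (ENNReal.div_lt_div_left (by simp) (by simp) (by norm_num)))
  exact ⟨φ, hφ, (three_quarters_lt_one_sub_two_mul hd).trans_le hone, htransfer⟩
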